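/- Let V_0 > 0 be a real with Δt ≤ V_0/(2·b_max). Then for every v ≥ V_0, v·Δt ≤ B_ex(v). (That is, the reactivity assumption v·Δt ≤ B(v) for all v above the minimal speed limit V_0 holds for the example braking function B_ex whenever the control period Δt is small enough.) -/

import Mathlib

/-!
Braking continuously at rate `bmax` from speed `v` takes distance `v ^ 2 / (2 * bmax)`. This
quantity solves the recursive step exactly and lies below the initial value `v * Δt / 2` for
`v ≤ bmax * Δt`, so it bounds `Bex v` from below. Reactivity follows since
`v * Δt ≤ v ^ 2 / (2 * bmax)` as soon as `Δt ≤ v / (2 * bmax)`.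
-/

theorem nonneg_induction_of_sub {G : Type*} [AddCommGroup G] [LinearOrder G]
    [IsOrderedAddMonoid G] [Archimedean G] {c : G} (hc : 0 < c) {p : G → Prop}
    (base : ∀ v, 0 ≤ v → v < c → p v) (step : ∀ v, c ≤ v → p (v - c) → p v)
    {v : G} (hv : 0 ≤ v) : p v := by
  obtain ⟨n, hn⟩ := exists_lt_nsmul hc v
  induction n generalizing v with
  | zero => exact absurd hn (by simpa using hv)
  | succ n ih =>
    rcases lt_or_ge v c with hvc | hcv
    · exact base v hv hvc
    · exact step v hcv (ih (sub_nonneg.2 hcv) (by rwa [sub_lt_iff_lt_add, ← succ_nsmul]))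

section BrakingDistance

variable {K : Type*} [Field K]

theorem sq_div_two_mul_eq_add_sq_sub [NeZero (2 : K)] {bmax : K} (hb : bmax ≠ 0)
    (Δt v : K) :
    v ^ 2 / (2 * bmax) =
      v * Δt - bmax * Δt ^ 2 / 2 + (v - bmax * Δt) ^ 2 / (2 * bmax) := by
  field_simp
  ring

variable [LinearOrder K] [IsStrictOrderedRing K]

theorem sq_div_two_mul_le_mul_div_two {bmax Δt v : K} (hb : 0 < bmax) (hv : 0 ≤ v)
    (hvb : v ≤ bmax * Δt) : v ^ 2 / (2 * bmax) ≤ v * Δt / 2 :=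
  calc v ^ 2 / (2 * bmax) = v * v / (2 * bmax) := by rw [sq]
    _ ≤ v * (bmax * Δt) / (2 * bmax) := by gcongr
    _ = v * Δt / 2 := by field_simp

variable [Archimedean K] {bmax Δt : K} {Bex : K → K} {v : K}

theorem sq_div_two_mul_le_Bex (hb : 0 < bmax) (ht : 0 < Δt)
    (hBex1 : ∀ v, 0 ≤ v → v < bmax * Δt → v * Δt / 2 ≤ Bex v)
    (hBex2 : ∀ v, bmax * Δt ≤ v →
      v * Δt - bmax * Δt ^ 2 / 2 + Bex (v - bmax * Δt) ≤ Bex v)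
    (hv : 0 ≤ v) : v ^ 2 / (2 * bmax) ≤ Bex v := by
  refine nonneg_induction_of_sub (p := fun v ↦ v ^ 2 / (2 * bmax) ≤ Bex v) (mul_pos hb ht)
    (fun v hv hvb ↦ ?_) (fun v hbv ih ↦ ?_) hv
  · exact (sq_div_two_mul_le_mul_div_two hb hv hvb.le).trans (hBex1 v hv hvb)
  · calc v ^ 2 / (2 * bmax)
        = v * Δt - bmax * Δt ^ 2 / 2 + (v - bmax * Δt) ^ 2 / (2 * bmax) :=
          sq_div_two_mul_eq_add_sq_sub hb.ne' Δt v
      _ ≤ v * Δt - bmax * Δt ^ 2 / 2 + Bex (v - bmax * Δt) := by gcongr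
      _ ≤ Bex v := hBex2 v hbv

theorem Bex_reactivity_general (hb : 0 < bmax) (ht : 0 < Δt)
    (hBex1 : ∀ v, 0 ≤ v → v < bmax * Δt → v * Δt / 2 ≤ Bex v)
    (hBex2 : ∀ v, bmax * Δt ≤ v →
      v * Δt - bmax * Δt ^ 2 / 2 + Bex (v - bmax * Δt) ≤ Bex v)
    (hΔt : Δt ≤ v / (2 * bmax)) : v * Δt ≤ Bex v := by
  have hv : 0 < v := (div_pos_iff_of_pos_right (by positivity)).1 (ht.trans_le hΔt)
  calc v * Δt ≤ v * (v / (2 * bmax)) := by gcongr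
    _ = v ^ 2 / (2 * bmax) := by rw [sq, mul_div_assoc]
    _ ≤ Bex v := sq_div_two_mul_le_Bex hb ht hBex1 hBex2 hv.le

end BrakingDistance

/-- if `V₀ > 0` and `Δt ≤ V₀ / (2·b_max)`, then for every `v ≥ V₀` we have
`v·Δt ≤ B_ex v` (the reactivity assumption holds for `B_ex` whenever the control period
`Δt` is small enough).  Here `B_ex` is any function satisfying the defining recursion. -/
theorem Bex_reactivity
    (bmax Δt : ℝ) (hb : 0 < bmax) (ht : 0 < Δt)
    (Bex : ℝ → ℝ)
    (hBex1 : ∀ v, 0 ≤ v → v < bmax * Δt → Bex v = v * Δt / 2)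
    (hBex2 : ∀ v, bmax * Δt ≤ v → Bex v = v * Δt - bmax * Δt ^ 2 / 2 + Bex (v - bmax * Δt))
    (V₀ : ℝ) (hV₀ : 0 < V₀) (hΔt : Δt ≤ V₀ / (2 * bmax)) :
    ∀ v, V₀ ≤ v → v * Δt ≤ Bex v := fun _ hv ↦
  Bex_reactivity_general hb ht (fun v hv hvb ↦ (hBex1 v hv hvb).ge) (fun v hbv ↦ (hBex2 v hbv).ge)
    (hΔt.trans (by gcongr))
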